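/- (Theorem 4.12.) γ is a clad helix if and only if Γ is a constant function; that is, writing T_n(s) = n'(s)/‖n'(s)‖ for the unit tangent of the normal indicatrix, there exist a unit vector v ∈ ℝ³ and a constant c with ⟪T_n(s), v⟫ = c for all s (i.e. the spherical image of the principal normal is a cylindrical/general helix) if and only if there exists a constant c' with Γ(s) = σ'(s)/(√(κ(s)² + τ(s)²)·(1 + σ(s)²)^{3/2}) = c' for all s. -/

import Mathlib

/-!
Write `(e₁, e₂, e₃)` for an orthonormal frame with `e₁' = p e₂`, `e₂' = -p e₁ + p f e₃`,
`e₃' = -p f e₂`, where `p > 0`. Then `e₂' = p √(1 + f²) E₂` with `E₂ = (-e₁ + f e₃) / √(1 + f²)`,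
and with `E₃ = e₂ × E₂ = (f e₁ + e₃) / √(1 + f²)` the frame `(e₂, E₂, E₃)` is of the same kind, with
`p` replaced by `p √(1 + f²)` and `f` by `f' / (p (1 + f²)^{3/2})` (`IsFrenetFrame.next`).

The Frenet frame `(t, n, b)` of `γ` has `p = κ` and ratio `τ / κ`. One step gives a frame
`(n, T_n, _)` with `p = √(κ² + τ²)` and ratio `σ`; a second step gives the Frenet frame of the normal
indicatrix, starting with `T_n` and having ratio `Γ`. The claim is then Lancret's theorem for that
frame (`IsFrenetFrame.lancret`): `e₁` makes a constant angle with a fixed direction if and only if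
`f` is constant. If `f = c`, then `c e₁ + e₃` is a constant nonzero vector. Conversely, differentiating
`⟪e₁, v⟫ = c` gives `⟪e₂, v⟫ = 0` and then `f ⟪e₃, v⟫ = c`, where `⟪e₃, v⟫` is constant, and nonzero
because otherwise `v` would vanish.
-/

open scoped RealInnerProductSpace Topology

/-- The cross product on `ℝ³` (as `EuclideanSpace ℝ (Fin 3)`). -/
noncomputable def cross3 (u v : EuclideanSpace ℝ (Fin 3)) : EuclideanSpace ℝ (Fin 3) :=
  (WithLp.equiv 2 (Fin 3 → ℝ)).symm
    ![u 1 * v 2 - u 2 * v 1, u 2 * v 0 - u 0 * v 2, u 0 * v 1 - u 1 * v 0]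

open scoped ContDiff

/-! ### Frenet frames and Lancret's theorem -/

/-- An orthonormal moving frame `(e₁, e₂, e₃)` along `ℝ` satisfying Frenet-type equations with
speed-times-curvature `p > 0` and ratio "torsion over curvature" `f`:
`e₁' = p e₂`, `e₂' = -p e₁ + p f e₃`, `e₃' = -p f e₂`. Using the ratio `f` rather than the torsion
makes the class of frames stable under `IsFrenetFrame.next`. -/
structure IsFrenetFrame {E : Type*} [NormedAddCommGroup E] [InnerProductSpace ℝ E]
    (p f : ℝ → ℝ) (e₁ e₂ e₃ : ℝ → E) : Prop where
  smooth_p : ContDiff ℝ ∞ p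
  smooth_f : ContDiff ℝ ∞ f
  pos : ∀ s, 0 < p s
  inner₁₁ : ∀ s, ⟪e₁ s, e₁ s⟫ = 1
  inner₂₂ : ∀ s, ⟪e₂ s, e₂ s⟫ = 1
  inner₃₃ : ∀ s, ⟪e₃ s, e₃ s⟫ = 1
  inner₁₂ : ∀ s, ⟪e₁ s, e₂ s⟫ = 0
  inner₁₃ : ∀ s, ⟪e₁ s, e₃ s⟫ = 0
  inner₂₃ : ∀ s, ⟪e₂ s, e₃ s⟫ = 0
  deriv₁ : ∀ s, HasDerivAt e₁ (p s • e₂ s) s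
  deriv₂ : ∀ s, HasDerivAt e₂ (-p s • e₁ s + (p s * f s) • e₃ s) s
  deriv₃ : ∀ s, HasDerivAt e₃ (-(p s * f s) • e₂ s) s

lemma rpow_three_halves {x : ℝ} (hx : 0 ≤ x) : x ^ ((3 : ℝ) / 2) = √x ^ 3 := by
  rw [Real.sqrt_eq_rpow, ← Real.rpow_natCast, ← Real.rpow_mul hx]
  norm_num

lemma eq_sum_inner_of_orthonormal {E : Type*} [NormedAddCommGroup E] [InnerProductSpace ℝ E]
    (hE : Module.finrank ℝ E = 3) {x y z : E} (hx : ⟪x, x⟫ = 1) (hy : ⟪y, y⟫ = 1)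
    (hz : ⟪z, z⟫ = 1) (hxy : ⟪x, y⟫ = 0) (hxz : ⟪x, z⟫ = 0) (hyz : ⟪y, z⟫ = 0) (v : E) :
    v = ⟪x, v⟫ • x + ⟪y, v⟫ • y + ⟪z, v⟫ • z := by
  have : FiniteDimensional ℝ E := .of_finrank_pos (by omega)
  have ho : Orthonormal ℝ ![x, y, z] := by
    rw [orthonormal_iff_ite]
    intro i j
    fin_cases i <;> fin_cases j <;>
      simp [hxy, hxz, hyz, real_inner_comm x y, real_inner_comm x z, real_inner_comm y z] <;>
      (rw [real_inner_self_eq_norm_sq] at *; simp_all)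
  let B := OrthonormalBasis.mk ho (ho.linearIndependent.span_eq_top_of_card_eq_finrank
    (by simp [hE])).ge
  have h := B.sum_repr' v
  simpa [B, Fin.sum_univ_three] using h.symm

namespace IsFrenetFrame

variable {E : Type*} [NormedAddCommGroup E] [InnerProductSpace ℝ E]
  {p f : ℝ → ℝ} {e₁ e₂ e₃ : ℝ → E}

/-- A curve with unit tangent `e₂` has principal normal `(-e₁ + f e₃) / √(1 + f²)` and binormal
`(f e₁ + e₃) / √(1 + f²)`: together with `e₂` these again form a Frenet frame, whose ratio is
`f' / (p (1 + f²)^{3/2})`. -/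
lemma next (h : IsFrenetFrame p f e₁ e₂ e₃) :
    IsFrenetFrame (fun s => p s * √(1 + f s ^ 2))
      (fun s => deriv f s / (p s * (1 + f s ^ 2) ^ ((3 : ℝ) / 2))) e₂
      (fun s => (√(1 + f s ^ 2))⁻¹ • (f s • e₃ s - e₁ s))
      (fun s => (√(1 + f s ^ 2))⁻¹ • (f s • e₁ s + e₃ s)) := by
  have hpos (s : ℝ) : 0 < 1 + f s ^ 2 := by positivity
  have hr (s : ℝ) : 0 < √(1 + f s ^ 2) := Real.sqrt_pos.2 (hpos s)
  have hsq (s : ℝ) : √(1 + f s ^ 2) ^ 2 = 1 + f s ^ 2 := Real.sq_sqrt (hpos s).le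
  have hf := h.smooth_f
  have hf' : ContDiff ℝ ∞ (deriv f) := (contDiff_infty_iff_deriv.1 hf).2
  have hrs : ContDiff ℝ ∞ (fun s => √(1 + f s ^ 2)) :=
    (contDiff_const.add (hf.pow 2)).sqrt fun s => (hpos s).ne'
  have hfd (s : ℝ) : HasDerivAt f (deriv f s) s :=
    ((contDiff_infty_iff_deriv.1 hf).1 s).hasDerivAt
  have hrd (s : ℝ) : HasDerivAt (fun s => (√(1 + f s ^ 2))⁻¹)
      (-(f s * deriv f s) / √(1 + f s ^ 2) ^ 3) s := by
    refine ((((hfd s).pow 2).const_add 1).sqrt (hpos s).ne').inv (hr s).ne' |>.congr_deriv ?_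
    have := (hr s).ne'
    norm_num
    field_simp
  refine ⟨h.smooth_p.mul hrs, ?_, fun s => mul_pos (h.pos s) (hr s), h.inner₂₂, ?_, ?_, ?_, ?_, ?_,
    ?_, ?_, ?_⟩
  · simp only [rpow_three_halves (hpos _).le]
    exact hf'.div (h.smooth_p.mul (hrs.pow 3))
      fun s => (mul_pos (h.pos s) (pow_pos (hr s) 3)).ne'
  · intro s
    have := hsq s
    have := (hr s).ne'
    simp only [inner_smul_left, inner_smul_right, inner_sub_left, inner_sub_right, h.inner₁₁,
      h.inner₃₃, h.inner₁₃, real_inner_comm (e₁ s) (e₃ s), conj_trivial]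
    field_simp
    linarith
  · intro s
    have := hsq s
    have := (hr s).ne'
    simp only [inner_smul_left, inner_smul_right, inner_add_left, inner_add_right, h.inner₁₁,
      h.inner₃₃, h.inner₁₃, real_inner_comm (e₁ s) (e₃ s), conj_trivial]
    field_simp
    linarith
  · intro s
    simp [inner_smul_right, inner_sub_right, real_inner_comm (e₁ s) (e₂ s), h.inner₂₃, h.inner₁₂]
  · intro s
    simp [inner_smul_right, inner_add_right, real_inner_comm (e₁ s) (e₂ s), h.inner₂₃, h.inner₁₂]
  · intro s
    simp only [inner_smul_left, inner_smul_right, inner_sub_left, inner_add_right, h.inner₁₁,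
      h.inner₃₃, h.inner₁₃, real_inner_comm (e₁ s) (e₃ s), conj_trivial]
    ring
  · intro s
    convert h.deriv₂ s using 1
    have := (hr s).ne'
    match_scalars <;> field_simp
  · intro s
    refine ((hrd s).smul (((hfd s).smul (h.deriv₃ s)).sub (h.deriv₁ s))).congr_deriv ?_
    have h1 := hsq s
    have h2 := (hr s).ne'
    have h3 := (h.pos s).ne'
    simp only [rpow_three_halves (hpos _).le, Pi.sub_apply, Pi.smul_apply']
    generalize √(1 + f s ^ 2) = r at *
    match_scalars <;> field_simp <;> grind
  · intro s
    refine ((hrd s).smul (((hfd s).smul (h.deriv₁ s)).add (h.deriv₃ s))).congr_deriv ?_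
    have h1 := hsq s
    have h2 := (hr s).ne'
    have h3 := (h.pos s).ne'
    simp only [rpow_three_halves (hpos _).le, Pi.add_apply, Pi.smul_apply']
    generalize √(1 + f s ^ 2) = r at *
    match_scalars <;> field_simp <;> grind

/-- Lancret's theorem: `e₁` makes a constant angle with a fixed direction if and only if the ratio
`f` is constant. -/
lemma lancret (hE : Module.finrank ℝ E = 3) (h : IsFrenetFrame p f e₁ e₂ e₃) :
    (∃ (v : E) (c : ℝ), ‖v‖ = 1 ∧ ∀ s, ⟪e₁ s, v⟫ = c) ↔ ∃ c' : ℝ, ∀ s, f s = c' := by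
  constructor
  · rintro ⟨v, c, hv, hc⟩
    have h2 (s : ℝ) : ⟪e₂ s, v⟫ = 0 := by
      have hd := (h.deriv₁ s).inner ℝ (hasDerivAt_const s v)
      have := hd.unique ((hasDerivAt_const s c).congr_of_eventuallyEq (.of_forall hc))
      simpa [inner_smul_left, (h.pos s).ne'] using this
    have h3 (s : ℝ) : f s * ⟪e₃ s, v⟫ = c := by
      have hd := (h.deriv₂ s).inner ℝ (hasDerivAt_const s v)
      have := hd.unique ((hasDerivAt_const s (0 : ℝ)).congr_of_eventuallyEq (.of_forall h2))
      simp only [inner_zero_right, inner_add_left, inner_smul_left, hc, conj_trivial] at this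
      have hp := (h.pos s).ne'
      apply mul_left_cancel₀ hp
      linarith
    have hd3 (s : ℝ) : HasDerivAt (fun s => ⟪e₃ s, v⟫) 0 s := by
      simpa [inner_smul_left, h2] using (h.deriv₃ s).inner ℝ (hasDerivAt_const s v)
    have hconst (s : ℝ) : ⟪e₃ s, v⟫ = ⟪e₃ 0, v⟫ :=
      is_const_of_deriv_eq_zero (fun s => (hd3 s).differentiableAt) (fun s => (hd3 s).deriv) s 0
    have hne : ⟪e₃ 0, v⟫ ≠ 0 := by
      intro h0
      have hc0 : c = 0 := by rw [← h3 0, h0, mul_zero]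
      have := eq_sum_inner_of_orthonormal hE (h.inner₁₁ 0) (h.inner₂₂ 0) (h.inner₃₃ 0)
        (h.inner₁₂ 0) (h.inner₁₃ 0) (h.inner₂₃ 0) v
      rw [hc, h2, h0, hc0] at this
      simp [this] at hv
    exact ⟨c / ⟪e₃ 0, v⟫, fun s => by rw [eq_div_iff hne, ← hconst s, h3]⟩
  · rintro ⟨c, hc⟩
    -- The axis is the direction of the Darboux vector `c e₁ + e₃`, which is then constant.
    have hd (s : ℝ) : HasDerivAt (fun s => c • e₁ s + e₃ s) 0 s := by
      refine (((h.deriv₁ s).const_smul c).add (h.deriv₃ s)).congr_deriv ?_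
      rw [hc]
      module
    have hconst (s : ℝ) : c • e₁ s + e₃ s = c • e₁ 0 + e₃ 0 :=
      is_const_of_deriv_eq_zero (fun s => (hd s).differentiableAt) (fun s => (hd s).deriv) s 0
    have hne : c • e₁ 0 + e₃ 0 ≠ 0 := by
      intro h0
      have := congrArg (fun x => ⟪e₃ 0, x⟫) h0
      simp only [inner_add_right, inner_smul_right, h.inner₃₃, real_inner_comm (e₁ 0) (e₃ 0),
        h.inner₁₃, inner_zero_right] at this
      norm_num at this
    refine ⟨‖c • e₁ 0 + e₃ 0‖⁻¹ • (c • e₁ 0 + e₃ 0), ‖c • e₁ 0 + e₃ 0‖⁻¹ * c,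
      norm_smul_inv_norm hne, fun s => ?_⟩
    rw [inner_smul_right, ← hconst s, inner_add_right, inner_smul_right, h.inner₁₁, h.inner₁₃]
    ring

end IsFrenetFrame

/-! ### The Frenet frame of a space curve -/

lemma cross3_apply (u v : EuclideanSpace ℝ (Fin 3)) :
    cross3 u v = !₂[u 1 * v 2 - u 2 * v 1, u 2 * v 0 - u 0 * v 2, u 0 * v 1 - u 1 * v 0] := rfl

lemma inner_cross3_left (u v : EuclideanSpace ℝ (Fin 3)) : ⟪u, cross3 u v⟫ = 0 := by
  simp [cross3_apply, PiLp.inner_apply, Fin.sum_univ_three]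
  ring

lemma inner_cross3_right (u v : EuclideanSpace ℝ (Fin 3)) : ⟪v, cross3 u v⟫ = 0 := by
  simp [cross3_apply, PiLp.inner_apply, Fin.sum_univ_three]
  ring

lemma inner_cross3_self (u v : EuclideanSpace ℝ (Fin 3)) :
    ⟪cross3 u v, cross3 u v⟫ = ⟪u, u⟫ * ⟪v, v⟫ - ⟪u, v⟫ ^ 2 := by
  simp [cross3_apply, PiLp.inner_apply, Fin.sum_univ_three, -inner_self_eq_norm_sq_to_K]
  ring

lemma ContDiff.cross3 {u v : ℝ → EuclideanSpace ℝ (Fin 3)} (hu : ContDiff ℝ ∞ u)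
    (hv : ContDiff ℝ ∞ v) : ContDiff ℝ ∞ (fun s => cross3 (u s) (v s)) := by
  have hu' := contDiff_euclidean.1 hu
  have hv' := contDiff_euclidean.1 hv
  refine contDiff_euclidean.2 fun i => ?_
  fin_cases i
  · exact ((hu' 1).mul (hv' 2)).sub ((hu' 2).mul (hv' 1))
  · exact ((hu' 2).mul (hv' 0)).sub ((hu' 0).mul (hv' 2))
  · exact ((hu' 0).mul (hv' 1)).sub ((hu' 1).mul (hv' 0))

lemma inner_deriv_add_inner_deriv_eq_zero {E : Type*} [NormedAddCommGroup E]
    [InnerProductSpace ℝ E] {u v : ℝ → E} {u' v' : E} {c s : ℝ} (hc : ∀ s, ⟪u s, v s⟫ = c)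
    (hu : HasDerivAt u u' s) (hv : HasDerivAt v v' s) : ⟪u s, v'⟫ + ⟪u', v s⟫ = 0 :=
  (hu.inner ℝ hv).unique ((hasDerivAt_const s c).congr_of_eventuallyEq (.of_forall hc))

/-- The Frenet–Serret formulas. -/
lemma isFrenetFrame_of_curve
    {t n b : ℝ → EuclideanSpace ℝ (Fin 3)} {κ τ : ℝ → ℝ}
    (hts : ContDiff ℝ ∞ t)
    (hunit : ∀ s, ‖t s‖ = 1)
    (hκ : κ = fun s => ‖deriv t s‖)
    (hκpos : ∀ s, 0 < κ s)
    (hn : n = fun s => (κ s)⁻¹ • deriv t s)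
    (hb : b = fun s => cross3 (t s) (n s))
    (hτ : τ = fun s => ⟪deriv n s, b s⟫) :
    IsFrenetFrame κ (fun s => τ s / κ s) t n b := by
  have hd {u : ℝ → EuclideanSpace ℝ (Fin 3)} (hu : ContDiff ℝ ∞ u) (s : ℝ) :
      HasDerivAt u (deriv u s) s := ((contDiff_infty_iff_deriv.1 hu).1 s).hasDerivAt
  have hts' : ContDiff ℝ ∞ (deriv t) := (contDiff_infty_iff_deriv.1 hts).2
  have hκs : ContDiff ℝ ∞ κ := by
    rw [hκ]
    refine hts'.norm ℝ fun s => norm_pos_iff.1 ?_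
    simpa [hκ] using hκpos s
  have hns : ContDiff ℝ ∞ n := hn ▸ (hκs.inv fun s => (hκpos s).ne').smul hts'
  have hbs : ContDiff ℝ ∞ b := hb ▸ hts.cross3 hns
  have hτs : ContDiff ℝ ∞ τ := hτ ▸ (contDiff_infty_iff_deriv.1 hns).2.inner ℝ hbs
  have ht' (s : ℝ) : deriv t s = κ s • n s := by
    rw [hn]
    simp [smul_smul, (hκpos s).ne']
  have htt (s : ℝ) : ⟪t s, t s⟫ = 1 := by simp [hunit]
  have hnn (s : ℝ) : ⟪n s, n s⟫ = 1 := by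
    have h1 : ‖deriv t s‖ = κ s := by rw [hκ]
    have := (hκpos s).ne'
    rw [hn]
    simp only [inner_smul_left, inner_smul_right, real_inner_self_eq_norm_sq, h1, conj_trivial]
    field_simp
  have htn (s : ℝ) : ⟪t s, n s⟫ = 0 := by
    have := inner_deriv_add_inner_deriv_eq_zero htt (hd hts s) (hd hts s)
    rw [ht', inner_smul_left, inner_smul_right, real_inner_comm (t s) (n s), conj_trivial] at this
    exact (mul_eq_zero.1 (by linarith : κ s * ⟪t s, n s⟫ = 0)).resolve_left (hκpos s).ne'
  have htb (s : ℝ) : ⟪t s, b s⟫ = 0 := by rw [hb]; exact inner_cross3_left _ _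
  have hnb (s : ℝ) : ⟪n s, b s⟫ = 0 := by rw [hb]; exact inner_cross3_right _ _
  have hbb (s : ℝ) : ⟪b s, b s⟫ = 1 := by
    simp only [hb, inner_cross3_self, htt, hnn, htn]
    norm_num
  have hτ' (s : ℝ) : ⟪b s, deriv n s⟫ = τ s := by rw [hτ, real_inner_comm]
  have hexp (s : ℝ) := eq_sum_inner_of_orthonormal (by simp) (htt s) (hnn s) (hbb s) (htn s) (htb s)
    (hnb s)
  refine ⟨hκs, hτs.div hκs fun s => (hκpos s).ne', hκpos, htt, hnn, hbb, htn, htb, hnb,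
    fun s => ht' s ▸ hd hts s, fun s => ?_, fun s => ?_⟩
  · refine (hd hns s).congr_deriv ?_
    have h1 : ⟪t s, deriv n s⟫ = -κ s := by
      have := inner_deriv_add_inner_deriv_eq_zero htn (hd hts s) (hd hns s)
      rw [ht', inner_smul_left, hnn, conj_trivial] at this
      linarith
    have h2 : ⟪n s, deriv n s⟫ = 0 := by
      have := inner_deriv_add_inner_deriv_eq_zero hnn (hd hns s) (hd hns s)
      rw [real_inner_comm (n s) (deriv n s)] at this
      linarith
    rw [mul_div_cancel₀ _ (hκpos s).ne', hexp s (deriv n s), h1, h2, hτ']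
    module
  · refine (hd hbs s).congr_deriv ?_
    have h1 : ⟪t s, deriv b s⟫ = 0 := by
      have := inner_deriv_add_inner_deriv_eq_zero htb (hd hts s) (hd hbs s)
      rw [ht', inner_smul_left, hnb] at this
      linarith
    have h2 : ⟪n s, deriv b s⟫ = -τ s := by
      have := inner_deriv_add_inner_deriv_eq_zero hnb (hd hns s) (hd hbs s)
      rw [real_inner_comm (b s) (deriv n s), hτ'] at this
      linarith
    have h3 : ⟪b s, deriv b s⟫ = 0 := by
      have := inner_deriv_add_inner_deriv_eq_zero hbb (hd hbs s) (hd hbs s)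
      rw [real_inner_comm (b s) (deriv b s)] at this
      linarith
    rw [mul_div_cancel₀ _ (hκpos s).ne', hexp s (deriv b s), h1, h2, h3]
    module

/-- Theorem 4.12 (classical form): `γ` is a clad helix (the unit tangent `T_n = n'/‖n'‖`
of the normal indicatrix makes a constant angle with a fixed unit vector) iff
`Γ = σ'/(√(κ²+τ²)·(1+σ²)^{3/2})` is constant. -/
theorem clad_helix_characterization
    (γ : ℝ → EuclideanSpace ℝ (Fin 3))
    (hγ : ContDiff ℝ (⊤ : ℕ∞) γ)
    (t n b : ℝ → EuclideanSpace ℝ (Fin 3)) (κ τ : ℝ → ℝ)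
    (ht : t = deriv γ)
    (hunit : ∀ s, ‖t s‖ = 1)
    (hκ : κ = fun s => ‖deriv t s‖)
    (hκpos : ∀ s, 0 < κ s)
    (hn : n = fun s => (κ s)⁻¹ • deriv t s)
    (hb : b = fun s => cross3 (t s) (n s))
    (hτ : τ = fun s => ⟪deriv n s, b s⟫)
    (f : ℝ → ℝ) (hf : f = fun s => τ s / κ s)
    (σ : ℝ → ℝ)
    (hσ : σ = fun s => deriv f s / (κ s * (1 + f s ^ 2) ^ ((3 : ℝ) / 2)))
    (Γ : ℝ → ℝ)
    (hΓ : Γ = fun s => deriv σ s /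
      (Real.sqrt (κ s ^ 2 + τ s ^ 2) * (1 + σ s ^ 2) ^ ((3 : ℝ) / 2)))
    (Tn : ℝ → EuclideanSpace ℝ (Fin 3))
    (hTn : Tn = fun s => ‖deriv n s‖⁻¹ • deriv n s)
    :
    (∃ (v : EuclideanSpace ℝ (Fin 3)) (c : ℝ), ‖v‖ = 1 ∧ ∀ s : ℝ, ⟪Tn s, v⟫ = c) ↔
      ∃ c' : ℝ, ∀ s : ℝ, Γ s = c' := by
  have hts : ContDiff ℝ ∞ t := ht ▸ (contDiff_infty_iff_deriv.1 hγ).2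
  have h₁ : IsFrenetFrame κ f t n b := hf ▸ isFrenetFrame_of_curve hts hunit hκ hκpos hn hb hτ
  have h₂ := h₁.next
  have hω (s : ℝ) : κ s * √(1 + f s ^ 2) = √(κ s ^ 2 + τ s ^ 2) := by
    have := (hκpos s).ne'
    rw [show κ s ^ 2 + τ s ^ 2 = κ s ^ 2 * (1 + f s ^ 2) by rw [hf]; field_simp,
      Real.sqrt_mul (sq_nonneg _), Real.sqrt_sq (hκpos s).le]
  have hTn' : Tn = fun s => (√(1 + f s ^ 2))⁻¹ • (f s • b s - t s) := by
    funext s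
    have hp := h₂.pos s
    have hN := norm_eq_sqrt_real_inner ((√(1 + f s ^ 2))⁻¹ • (f s • b s - t s))
    rw [h₂.inner₂₂ s, Real.sqrt_one] at hN
    simp only [hTn]
    rw [(h₂.deriv₁ s).deriv, norm_smul, hN, Real.norm_of_nonneg hp.le, mul_one,
      inv_smul_smul₀ hp.ne']
  rw [← hσ, ← hTn'] at h₂
  have h₃ := h₂.next
  simp only [hω] at h₃
  rw [← hΓ] at h₃
  exact h₃.lancret (by simp)
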